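/- Let n ≥ 1 and ℓ ≤ n, let H_{B₂} and H_R be finite-dimensional, and let ψ ∈ H_A ⊗ (H_{B₁} ⊗ H_{B₂}) ⊗ H_R with H_{B₁} = ℂ^V be a unit vector of the form ψ = ∑_{x∈V} √q_x |x̃⟩_A ⊗ |x̃⟩_{B₁} ⊗ |ϑ_x⟩_{B₂R}, where q is a probability distribution on V and the |ϑ_x⟩ are unit vectors (this expresses the condition H(X^A|B) = 0 for B = B₁B₂). Let g : V → (ZMod 2)^ℓ be a surjective linear map and 0 ≤ ε ≤ 1, and suppose the hashed X-key is ε-secure against R: D(σ_g^{KR}, 2^{−ℓ} 1_K ⊗ ψ^R) ≤ ε. Then for every surjective linear map f⊥ : V → (ZMod 2)^{n−ℓ} with ker f⊥ = range gᵀ, there exists a family of POVMs (Λ^c_z)_{z∈V} on H_B = H_{B₁} ⊗ H_{B₂}, one for each c ∈ (ZMod 2)^{n−ℓ}, such that ∑_{z∈V} ⟨ψ| (|z⟩⟨z| ⊗ Λ^{f⊥(z)}_z ⊗ 1_R) |ψ⟩ ≥ 1 − √(2ε); that is, f⊥ is a compressor to n−ℓ bits from which, together with B, the Z-measurement outcome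 is √(2ε)-recoverable. -/

import Mathlib

open Matrix BigOperators Finset
open scoped Classical ComplexOrder

noncomputable section

/-- The positive semidefinite square root of a matrix (zero if the matrix is not PSD). -/
def psdSqrt {ι : Type*} [Fintype ι] [DecidableEq ι] (M : Matrix ι ι ℂ) : Matrix ι ι ℂ :=
  if h : M.PosSemidef then
    (h.1.eigenvectorUnitary : Matrix ι ι ℂ) * diagonal ((↑) ∘ Real.sqrt ∘ h.1.eigenvalues) *
      (star h.1.eigenvectorUnitary : Matrix ι ι ℂ)
  else 0

/-- Trace norm ‖M‖₁ = Tr √(M†M). -/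
def traceNorm {ι : Type*} [Fintype ι] [DecidableEq ι] (M : Matrix ι ι ℂ) : ℝ :=
  ((psdSqrt (Mᴴ * M)).trace).re

/-- Trace distance D(ρ,σ) = ‖ρ−σ‖₁/2. -/
def traceDist {ι : Type*} [Fintype ι] [DecidableEq ι] (ρ σ : Matrix ι ι ℂ) : ℝ :=
  traceNorm (ρ - σ) / 2

/-- The adjoint fᵀ of a linear map f : (ZMod 2)^n → (ZMod 2)^m with respect to the
standard bilinear forms ⟨u,v⟩ = ∑ i, u i * v i, i.e. the map with ⟨fᵀc, v⟩ = ⟨c, f v⟩. -/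
def adjLin {n m : ℕ}
    (f : ((Fin n → ZMod 2)) →ₗ[ZMod 2] (Fin m → ZMod 2)) :
    ((Fin m → ZMod 2)) →ₗ[ZMod 2] (Fin n → ZMod 2) :=
  Matrix.toLin' (LinearMap.toMatrix' f)ᵀ

/-- Conjugate (X) basis vector of n qubits: |x̃⟩_z = (−1)^{⟨x,z⟩} / 2^{n/2}. -/
def xVecV (n : ℕ) (x z : Fin n → ZMod 2) : ℂ :=
  (-1 : ℂ) ^ ((∑ i, x i * z i : ZMod 2)).val / (Real.sqrt (2 ^ n) : ℂ)

/-- Component of (⟨x̃|⊗1_{BR})|ψ⟩. -/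
def condVecXV {n : ℕ} {β r : Type*} [Fintype β] [Fintype r]
    (ψ : (Fin n → ZMod 2) × β × r → ℂ) (x : Fin n → ZMod 2) (p : β × r) : ℂ :=
  ∑ z, (starRingEnd ℂ) (xVecV n x z) * ψ (z, p.1, p.2)

/-- Unnormalized conditional state ϑ_x^R = Tr_B[(⟨x̃|⊗1)|ψ⟩⟨ψ|(|x̃⟩⊗1)]. -/
def thetaRV {n : ℕ} {β r : Type*} [Fintype β] [Fintype r]
    (ψ : (Fin n → ZMod 2) × β × r → ℂ) (x : Fin n → ZMod 2) : Matrix r r ℂ :=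
  Matrix.of fun s s' => ∑ b, condVecXV ψ x (b, s) * (starRingEnd ℂ) (condVecXV ψ x (b, s'))

/-- Reduced state ψ^R = Tr_{AB}|ψ⟩⟨ψ|. -/
def reducedR {α β r : Type*} [Fintype α] [Fintype β] [Fintype r]
    (ψ : α × β × r → ℂ) : Matrix r r ℂ :=
  Matrix.of fun s s' => ∑ z, ∑ b, ψ (z, b, s) * (starRingEnd ℂ) (ψ (z, b, s'))

/-- The hashed X-key state σ_g^{KR} = ∑_k |k⟩⟨k| ⊗ ∑_{x : g x = k} ϑ_x^R. -/
def keyState {n ℓ : ℕ} {β r : Type*} [Fintype β] [Fintype r]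
    (ψ : (Fin n → ZMod 2) × β × r → ℂ)
    (g : ((Fin n → ZMod 2)) →ₗ[ZMod 2] (Fin ℓ → ZMod 2)) :
    Matrix ((Fin ℓ → ZMod 2) × r) ((Fin ℓ → ZMod 2) × r) ℂ :=
  Matrix.of fun p q =>
    if p.1 = q.1 then ∑ x ∈ Finset.univ.filter (fun x => g x = p.1), thetaRV ψ x p.2 q.2
    else 0

/-- The ideal key state 2^{−ℓ} 1_K ⊗ ψ^R on ℓ key bits. -/
def idealKeyV (ℓ : ℕ) {n : ℕ} {β r : Type*} [Fintype β] [Fintype r]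
    (ψ : (Fin n → ZMod 2) × β × r → ℂ) :
    Matrix ((Fin ℓ → ZMod 2) × r) ((Fin ℓ → ZMod 2) × r) ℂ :=
  Matrix.of fun p q => (if p.1 = q.1 then ((2 : ℂ) ^ ℓ)⁻¹ else 0) * reducedR ψ p.2 q.2

end

/-!
Write `G k` for the unnormalized state of `R` given the hashed key `k`. The Powers–Størmer
inequality in its Fuchs–van de Graaf form, followed by Cauchy–Schwarz, turns `ε`-security of the key
into `2^ℓ (1 - ε)² ≤ Tr X²` for `X = ∑ k, √(G k)`.

The `X`-components of `ψ` are mutually orthogonal on `B`. Grouping them by the value of `g` into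
operators `C k` with `G k = C k (C k)†`, the amplitude of `ψ` at a `Z`-value in a fixed coset of
`range gᵀ` is, up to a factor, a twisted sum `∑ k, (-1)^⟨k, u⟩ C k`, where `u` labels the point of
the coset. Measuring with the equally twisted sums of the polar parts of the `C k` identifies `u`
with success probability `2^{-ℓ} Tr X²`. As `f⊥` reveals the coset, the `Z`-value is recovered with
probability at least `(1 - ε)² ≥ 1 - √(2ε)`.
-/

section TraceNorm

open scoped MatrixOrder

variable {ι r β : Type*} [Fintype ι] [Fintype r] [Fintype β]

theorem re_trace_nonneg {A : Matrix ι ι ℂ} (hA : 0 ≤ A) : 0 ≤ A.trace.re :=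
  (Complex.le_def.mp hA.posSemidef.trace_nonneg).1

theorem re_trace_mul_mul_conjTranspose_mono {A B : Matrix β β ℂ} (h : A ≤ B) (C : Matrix r β ℂ) :
    (C * A * Cᴴ).trace.re ≤ (C * B * Cᴴ).trace.re := by
  have hC := re_trace_nonneg ((le_iff.mp h).mul_mul_conjTranspose_same C).nonneg
  rw [Matrix.mul_sub, Matrix.sub_mul, Matrix.trace_sub, Complex.sub_re] at hC
  exact sub_nonneg.mp hC

/-- **Cauchy–Schwarz** for the Hilbert–Schmidt inner product of Hermitian matrices. -/
theorem re_trace_mul_sq_le {A B : Matrix ι ι ℂ} (hA : A.IsHermitian) (hB : B.IsHermitian) :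
    (A * B).trace.re ^ 2 ≤ (A * A).trace.re * (B * B).trace.re := by
  have hquad (t : ℝ) :
      0 ≤ (B * B).trace.re * (t * t) + 2 * (A * B).trace.re * t + (A * A).trace.re := by
    have hherm : (A + t • B)ᴴ = A + t • B := by
      rw [conjTranspose_add, conjTranspose_smul, hA.eq, hB.eq, star_trivial]
    have h := re_trace_nonneg (posSemidef_conjTranspose_mul_self (A + t • B)).nonneg
    simp only [hherm, Matrix.add_mul, Matrix.mul_add, Matrix.smul_mul, Matrix.mul_smul,
      Matrix.trace_add, Matrix.trace_smul, Complex.add_re, Complex.smul_re, smul_eq_mul,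
      Matrix.trace_mul_comm B A] at h
    linarith
  have h := discrim_le_zero hquad
  rw [discrim] at h
  linarith

theorem re_trace_mul_nonneg {A B : Matrix ι ι ℂ} (hA : 0 ≤ A) (hB : 0 ≤ B) :
    0 ≤ (A * B).trace.re := by
  have hcycle : (A * B).trace = (CFC.sqrt A * B * CFC.sqrt A).trace := by
    rw [Matrix.trace_mul_cycle, CFC.sqrt_mul_sqrt_self A]
  rw [hcycle]
  exact re_trace_nonneg (conjugate_nonneg_of_nonneg hB (CFC.sqrt_nonneg A))

theorem trace_mul_mul_self_sub_mul_self {W S T : Matrix ι ι ℂ} (hW : Commute W (S - T)) :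
    (W * (S * S - T * T)).trace = (W * (S - T) * (S + T)).trace := by
  have hsymm : (2 : ℂ) • (S * S - T * T) = (S - T) * (S + T) + (S + T) * (S - T) := by
    rw [two_smul]
    noncomm_ring
  have hcycle : (W * ((S + T) * (S - T))).trace = (W * (S - T) * (S + T)).trace := by
    rw [← Matrix.mul_assoc, Matrix.trace_mul_comm, ← Matrix.mul_assoc, hW.eq]
  have hdouble : 2 * (W * (S * S - T * T)).trace = 2 * (W * (S - T) * (S + T)).trace := by
    rw [← smul_eq_mul, ← Matrix.trace_smul, ← Matrix.mul_smul, hsymm, Matrix.mul_add,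
      Matrix.trace_add, hcycle, Matrix.mul_assoc, two_mul]
  exact mul_left_cancel₀ two_ne_zero hdouble

variable [DecidableEq ι]

theorem psdSqrt_eq_sqrt (M : Matrix ι ι ℂ) : psdSqrt M = CFC.sqrt M := by
  by_cases hM : M.PosSemidef
  · rw [psdSqrt, dif_pos hM, CFC.sqrt_eq_real_sqrt M hM.nonneg, cfcₙ_eq_cfc, hM.1.cfc_eq]
    rfl
  · rw [psdSqrt, dif_neg hM, CFC.sqrt_of_not_nonneg (mt (·.posSemidef) hM)]

theorem traceNorm_eq_re_trace_abs (M : Matrix ι ι ℂ) : traceNorm M = (CFC.abs M).trace.re := by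
  rw [traceNorm, psdSqrt_eq_sqrt, CFC.abs, star_eq_conjTranspose]

theorem re_trace_mul_le_traceNorm {W M : Matrix ι ι ℂ} (hM : IsSelfAdjoint M)
    (hW : -1 ≤ W) (hW' : W ≤ 1) : (W * M).trace.re ≤ traceNorm M := by
  have hpos := re_trace_mul_nonneg (sub_nonneg.mpr hW') (CFC.posPart_nonneg M)
  have hneg := re_trace_mul_nonneg (neg_le_iff_add_nonneg.mp hW) (CFC.negPart_nonneg M)
  rw [traceNorm_eq_re_trace_abs, ← CFC.posPart_add_negPart M]
  nth_rw 1 [← CFC.posPart_sub_negPart M]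
  simp only [Matrix.sub_mul, Matrix.add_mul, Matrix.mul_sub, Matrix.one_mul, Matrix.trace_sub,
    Matrix.trace_add, Complex.sub_re, Complex.add_re] at hpos hneg ⊢
  linarith

theorem exists_mul_eq_abs {D : Matrix ι ι ℂ} (hD : IsSelfAdjoint D) :
    ∃ W : Matrix ι ι ℂ, -1 ≤ W ∧ W ≤ 1 ∧ Commute W D ∧ W * D = CFC.abs D := by
  have hcont (f : ℝ → ℝ) : ContinuousOn f (spectrum ℝ D) := D.finite_real_spectrum.continuousOn f
  set W := cfc (fun x : ℝ ↦ (SignType.sign x : ℝ)) D with hW_def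
  have hsign (x : ℝ) : (-1 : ℝ) ≤ SignType.sign x ∧ (SignType.sign x : ℝ) ≤ 1 := by
    cases SignType.sign x <;> norm_num
  have hWD : W * D = CFC.abs D := by
    conv_lhs => rw [← cfc_id ℝ D, hW_def]
    rw [← cfc_mul _ _ D (hcont _) (hcont _), CFC.abs_eq_cfc_norm D]
    exact cfc_congr fun x _ ↦ sign_mul_self x
  have hcomm : Commute W D := by
    conv_rhs => rw [← cfc_id ℝ D]
    exact cfc_commute_cfc _ _ D
  refine ⟨W, ?_, cfc_le_one _ D fun x _ ↦ (hsign x).2, hcomm, hWD⟩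
  rw [← cfc_const_one ℝ D, ← cfc_neg]
  exact (cfc_le_iff _ _ D (hcont _) (hcont _)).mpr fun x _ ↦ (hsign x).1

/-- The **Powers–Størmer inequality**. -/
theorem re_trace_sub_mul_sub_le_traceNorm {S T : Matrix ι ι ℂ} (hS : 0 ≤ S) (hT : 0 ≤ T) :
    ((S - T) * (S - T)).trace.re ≤ traceNorm (S * S - T * T) := by
  have hself {M : Matrix ι ι ℂ} (hM : 0 ≤ M) : IsSelfAdjoint (M * M) :=
    (hM.isSelfAdjoint.commute_iff hM.isSelfAdjoint).mp (Commute.refl M)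
  set D := S - T with hD_def
  have hD : IsSelfAdjoint D := hS.isSelfAdjoint.sub hT.isSelfAdjoint
  obtain ⟨W, hW, hW', hcomm, hWD⟩ := exists_mul_eq_abs hD
  have hsplit : CFC.abs D * (S + T) = D * D + ((CFC.abs D - D) * S + (CFC.abs D + D) * T) := by
    rw [hD_def]
    noncomm_ring
  have hsub : 0 ≤ CFC.abs D - D := by
    rw [CFC.abs_sub_self D]; exact nsmul_nonneg (CFC.negPart_nonneg D) 2
  have hadd : 0 ≤ CFC.abs D + D := by
    rw [CFC.abs_add_self D]; exact nsmul_nonneg (CFC.posPart_nonneg D) 2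
  calc (D * D).trace.re
      ≤ (D * D).trace.re + (((CFC.abs D - D) * S).trace.re + ((CFC.abs D + D) * T).trace.re) :=
        le_add_of_nonneg_right
          (add_nonneg (re_trace_mul_nonneg hsub hS) (re_trace_mul_nonneg hadd hT))
    _ = (W * (S * S - T * T)).trace.re := by
        rw [trace_mul_mul_self_sub_mul_self hcomm, ← hD_def, hWD, hsplit]
        simp only [Matrix.trace_add, Complex.add_re]
    _ ≤ traceNorm (S * S - T * T) := re_trace_mul_le_traceNorm
        (hself hS |>.sub <| hself hT) hW hW'

/-- The **Fuchs–van de Graaf inequality** for states given by their square roots. -/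
theorem one_sub_traceDist_le_re_trace_mul {S T : Matrix ι ι ℂ} (hS : 0 ≤ S) (hT : 0 ≤ T)
    (hS_tr : (S * S).trace = 1) (hT_tr : (T * T).trace = 1) :
    1 - traceDist (S * S) (T * T) ≤ (S * T).trace.re := by
  have hexpand : ((S - T) * (S - T)).trace.re = 2 - 2 * (S * T).trace.re := by
    simp only [Matrix.sub_mul, Matrix.mul_sub, Matrix.trace_sub, Complex.sub_re, hS_tr, hT_tr,
      Matrix.trace_mul_comm T S, Complex.one_re]
    ring
  have h := re_trace_sub_mul_sub_le_traceNorm hS hT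
  rw [traceDist]
  linarith

end TraceNorm

section ClassicalQuantum

open scoped MatrixOrder

/-- The classical-quantum operator `∑ k, |k⟩⟨k| ⊗ A k`. -/
def cqState {κ r : Type*} [DecidableEq κ] (A : κ → Matrix r r ℂ) : Matrix (κ × r) (κ × r) ℂ :=
  Matrix.of fun p q ↦ if p.1 = q.1 then A p.1 p.2 q.2 else 0

theorem conjTranspose_cqState {κ r : Type*} [DecidableEq κ] (A : κ → Matrix r r ℂ) :
    (cqState A)ᴴ = cqState fun k ↦ (A k)ᴴ := by
  ext ⟨k, s⟩ ⟨k', s'⟩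
  by_cases h : k = k'
  · subst h; simp [cqState]
  · simp [cqState, h, Ne.symm h]

variable {κ r : Type*} [Fintype κ] [DecidableEq κ] [Fintype r]

theorem cqState_mul (A B : κ → Matrix r r ℂ) :
    cqState A * cqState B = cqState fun k ↦ A k * B k := by
  ext ⟨k, s⟩ ⟨k', s'⟩
  by_cases h : k = k'
  · subst h; simp [cqState, Matrix.mul_apply, Fintype.sum_prod_type, Finset.sum_ite_irrel]
  · simp [cqState, Matrix.mul_apply, Fintype.sum_prod_type, Finset.sum_ite_irrel, h]

theorem trace_cqState (A : κ → Matrix r r ℂ) : (cqState A).trace = ∑ k, (A k).trace := by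
  simp only [Matrix.trace, Matrix.diag_apply, cqState, Matrix.of_apply, if_true,
    Fintype.sum_prod_type]

theorem cqState_nonneg {κ r : Type*} [Finite κ] [DecidableEq κ] [Finite r]
    {A : κ → Matrix r r ℂ} (hA : ∀ k, 0 ≤ A k) : 0 ≤ cqState A := by
  have := Fintype.ofFinite κ
  have := Fintype.ofFinite r
  have hfactor : cqState A =
      (cqState fun k ↦ CFC.sqrt (A k))ᴴ * cqState fun k ↦ CFC.sqrt (A k) := by
    rw [conjTranspose_cqState, cqState_mul]
    congr! 2 with k
    rw [(CFC.sqrt_nonneg (A k)).posSemidef.1.eq, CFC.sqrt_mul_sqrt_self _ (hA k)]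
  rw [hfactor]
  exact (posSemidef_conjTranspose_mul_self _).nonneg

variable [DecidableEq r]

theorem one_sub_traceDist_cqState_le [Nonempty κ] {G : κ → Matrix r r ℂ} {ρ : Matrix r r ℂ}
    (hG : ∀ k, 0 ≤ G k) (hρ : 0 ≤ ρ) (hG_tr : (∑ k, G k).trace = 1) (hρ_tr : ρ.trace = 1) :
    1 - traceDist (cqState G) (cqState fun _ ↦ (Fintype.card κ : ℂ)⁻¹ • ρ) ≤
      (√(Fintype.card κ))⁻¹ * ((∑ k, CFC.sqrt (G k)) * CFC.sqrt ρ).trace.re := by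
  set c : ℝ := (√(Fintype.card κ))⁻¹
  set S := cqState fun k ↦ CFC.sqrt (G k)
  set T := cqState fun _ : κ ↦ c • CFC.sqrt ρ
  have hSS : S * S = cqState G := by
    rw [cqState_mul]
    congr! 2 with k
    exact CFC.sqrt_mul_sqrt_self _ (hG k)
  have hTT : T * T = cqState fun _ ↦ (Fintype.card κ : ℂ)⁻¹ • ρ := by
    have hc : ((c * c : ℝ) : ℂ) = (Fintype.card κ : ℂ)⁻¹ := by
      rw [← mul_inv, Real.mul_self_sqrt (Nat.cast_nonneg _), Complex.ofReal_inv,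
        Complex.ofReal_natCast]
    rw [cqState_mul]
    congr! 2
    rw [smul_mul_smul_comm, CFC.sqrt_mul_sqrt_self _ hρ, ← Complex.coe_smul, hc]
  have hS_tr : (S * S).trace = 1 := by rw [hSS, trace_cqState, ← Matrix.trace_sum, hG_tr]
  have hT_tr : (T * T).trace = 1 := by
    rw [hTT, trace_cqState, Finset.sum_const, Matrix.trace_smul, hρ_tr, smul_eq_mul, mul_one,
      Finset.card_univ, nsmul_eq_mul, mul_inv_cancel₀ (Nat.cast_ne_zero.mpr Fintype.card_ne_zero)]
  have hST_tr : (S * T).trace.re = c * ((∑ k, CFC.sqrt (G k)) * CFC.sqrt ρ).trace.re := by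
    rw [cqState_mul, trace_cqState, ← Matrix.trace_sum]
    simp only [Matrix.mul_smul, ← Finset.smul_sum, ← Matrix.sum_mul, Matrix.trace_smul,
      Complex.smul_re, smul_eq_mul]
  rw [← hSS, ← hTT, ← hST_tr]
  exact one_sub_traceDist_le_re_trace_mul (cqState_nonneg fun k ↦ CFC.sqrt_nonneg (G k))
    (cqState_nonneg fun _ ↦ smul_nonneg (by positivity) (CFC.sqrt_nonneg ρ)) hS_tr hT_tr

theorem one_sub_sq_le_of_traceDist_cqState_le [Nonempty κ] {G : κ → Matrix r r ℂ}
    (hG : ∀ k, 0 ≤ G k) (htr : (∑ k, G k).trace = 1) {ε : ℝ} (hε : ε ≤ 1)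
    (h : traceDist (cqState G) (cqState fun _ ↦ (Fintype.card κ : ℂ)⁻¹ • ∑ k, G k) ≤ ε) :
    (1 - ε) ^ 2 ≤ (Fintype.card κ : ℝ)⁻¹ *
      ((∑ k, CFC.sqrt (G k)) * ∑ k, CFC.sqrt (G k)).trace.re := by
  set ρ := ∑ k, G k
  have hρ : 0 ≤ ρ := Finset.sum_nonneg fun k _ ↦ hG k
  set X := ∑ k, CFC.sqrt (G k)
  have hX : 0 ≤ X := Finset.sum_nonneg fun k _ ↦ CFC.sqrt_nonneg (G k)
  have hcauchy : (X * CFC.sqrt ρ).trace.re ^ 2 ≤ (X * X).trace.re := by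
    have := re_trace_mul_sq_le hX.posSemidef.1 (CFC.sqrt_nonneg ρ).posSemidef.1
    rwa [CFC.sqrt_mul_sqrt_self _ hρ, htr, Complex.one_re, mul_one] at this
  calc (1 - ε) ^ 2 ≤ ((√(Fintype.card κ))⁻¹ * (X * CFC.sqrt ρ).trace.re) ^ 2 :=
        pow_le_pow_left₀ (sub_nonneg.mpr hε)
          ((sub_le_sub_left h 1).trans (one_sub_traceDist_cqState_le hG hρ htr htr)) 2
    _ = (Fintype.card κ : ℝ)⁻¹ * (X * CFC.sqrt ρ).trace.re ^ 2 := by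
        rw [mul_pow, inv_pow, Real.sq_sqrt (Nat.cast_nonneg _)]
    _ ≤ (Fintype.card κ : ℝ)⁻¹ * (X * X).trace.re := by gcongr

end ClassicalQuantum

section Orthogonal

variable {ι l m n : Type*} [DecidableEq ι] [Fintype m]

theorem sum_mul_sum_of_pairwise {A : ι → Matrix l m ℂ} {B : ι → Matrix m n ℂ}
    (h : Pairwise fun i j ↦ A i * B j = 0) (s t : Finset ι) :
    (∑ i ∈ s, A i) * ∑ j ∈ t, B j = ∑ i ∈ s ∩ t, A i * B i := by
  have hrow (i : ι) : A i * ∑ j ∈ t, B j = if i ∈ t then A i * B i else 0 := by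
    rw [Matrix.mul_sum]
    exact (Finset.sum_eq_ite i (fun j _ hj ↦ h hj.symm))
  simp only [Matrix.sum_mul, hrow, Finset.sum_ite_mem]

end Orthogonal

section PolarPart

open scoped MatrixOrder

variable {κ r β : Type*} [Fintype κ] [Fintype r] [Fintype β]

theorem sum_conjTranspose_mul_self_le_one [DecidableEq β] {D : κ → Matrix r β ℂ}
    (horth : Pairwise fun k k' ↦ D k * (D k')ᴴ = 0) (hD : ∀ k, D k * (D k)ᴴ * D k = D k) :
    ∑ k, (D k)ᴴ * D k ≤ 1 := by
  refine IsStarProjection.le_one ⟨?_, ?_⟩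
  · have horth' : Pairwise fun k k' ↦ (D k)ᴴ * D k * ((D k')ᴴ * D k') = 0 := by
      intro k k' hk
      rw [Matrix.mul_assoc, ← Matrix.mul_assoc (D k), horth hk, Matrix.zero_mul, Matrix.mul_zero]
    rw [IsIdempotentElem, sum_mul_sum_of_pairwise horth', Finset.inter_self]
    refine Finset.sum_congr rfl fun k _ ↦ ?_
    rw [Matrix.mul_assoc, ← Matrix.mul_assoc (D k), hD]
  · simp [IsSelfAdjoint, star_eq_conjTranspose]

theorem exists_mul_mul_conjTranspose_eq_sqrt (C : Matrix r β ℂ) :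
    ∃ J : Matrix r r ℂ, J * C * Cᴴ = CFC.sqrt (C * Cᴴ) ∧ J * C * (J * C)ᴴ * (J * C) = J * C := by
  set H := C * Cᴴ with hH_def
  have hH : 0 ≤ H := (posSemidef_self_mul_conjTranspose C).nonneg
  have hcont (f : ℝ → ℝ) : ContinuousOn f (spectrum ℝ H) := H.finite_real_spectrum.continuousOn f
  -- Since `0⁻¹ = 0`, this is the pseudo-inverse of `√H`, so that `J * C` is the polar part of `C`.
  set J := cfc (fun x : ℝ ↦ (√x)⁻¹) H with hJ_def
  have hJ : Jᴴ = J := (cfc_predicate _ H : IsSelfAdjoint J)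
  have hJH : J * H = cfc Real.sqrt H := by
    conv_lhs => rw [← cfc_id ℝ H, hJ_def]
    rw [← cfc_mul _ _ H (hcont _) (hcont _)]
    exact cfc_congr fun x _ ↦ (inv_mul_eq_div _ x).trans Real.div_sqrt
  have hJHJJ : J * H * J * J = J := by
    rw [hJH, hJ_def, ← cfc_mul _ _ H (hcont _) (hcont _), ← cfc_mul _ _ H (hcont _) (hcont _)]
    exact cfc_congr fun x _ ↦ by simpa using inv_mul_mul_self (√x)⁻¹
  refine ⟨J, by rw [Matrix.mul_assoc, hJH, CFC.sqrt_eq_real_sqrt H hH, cfcₙ_eq_cfc], ?_⟩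
  calc J * C * (J * C)ᴴ * (J * C) = J * H * J * J * C := by
        rw [conjTranspose_mul, hJ, hH_def]
        simp only [Matrix.mul_assoc]
    _ = J * C := by rw [hJHJJ]

theorem exists_sum_conjTranspose_mul_self_le_one [DecidableEq β]
    {C : κ → Matrix r β ℂ} (horth : Pairwise fun k k' ↦ C k * (C k')ᴴ = 0) :
    ∃ D : κ → Matrix r β ℂ, (∀ k, D k * (C k)ᴴ = CFC.sqrt (C k * (C k)ᴴ)) ∧
      (Pairwise fun k k' ↦ D k * (C k')ᴴ = 0) ∧ ∑ k, (D k)ᴴ * D k ≤ 1 := by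
  choose J hJ_sqrt hJ_isom using fun k ↦ exists_mul_mul_conjTranspose_eq_sqrt (C k)
  have hDC : Pairwise fun k k' ↦ J k * C k * (C k')ᴴ = 0 := by
    intro k k' hk
    rw [Matrix.mul_assoc, horth hk, Matrix.mul_zero]
  have hDD : Pairwise fun k k' ↦ J k * C k * (J k' * C k')ᴴ = 0 := by
    intro k k' hk
    rw [conjTranspose_mul, ← Matrix.mul_assoc, hDC hk, Matrix.zero_mul]
  exact ⟨fun k ↦ J k * C k, hJ_sqrt, hDC, sum_conjTranspose_mul_self_le_one hDD hJ_isom⟩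

end PolarPart

/-- A positive operator-valued measure on `ℂ^β` with outcomes in `ι`. -/
structure IsPOVM {ι β : Type*} [Fintype ι] [Fintype β] [DecidableEq β]
    (Λ : ι → Matrix β β ℂ) : Prop where
  posSemidef : ∀ i, (Λ i).PosSemidef
  sum_eq_one : ∑ i, Λ i = 1

section POVM

variable {ι κ β : Type*} [Fintype ι] [Fintype κ] [DecidableEq κ] [Fintype β] [DecidableEq β]

theorem IsPOVM.transpose {Λ : ι → Matrix β β ℂ} (hΛ : IsPOVM Λ) : IsPOVM fun i ↦ (Λ i)ᵀ where
  posSemidef i := (hΛ.posSemidef i).transpose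
  sum_eq_one := by rw [← transpose_sum, hΛ.sum_eq_one, transpose_one]

theorem IsPOVM.sum_fiber {Λ : ι → Matrix β β ℂ} (hΛ : IsPOVM Λ) (h : ι → κ) :
    IsPOVM fun k ↦ ∑ i with h i = k, Λ i where
  posSemidef k := posSemidef_sum _ fun i _ ↦ hΛ.posSemidef i
  sum_eq_one := by rw [Finset.sum_fiberwise, hΛ.sum_eq_one]

open scoped MatrixOrder in
theorem exists_isPOVM_ge [Nonempty ι] {E : ι → Matrix β β ℂ} (hE : ∀ i, 0 ≤ E i)
    (hsum : ∑ i, E i ≤ 1) : ∃ Λ : ι → Matrix β β ℂ, IsPOVM Λ ∧ ∀ i, E i ≤ Λ i := by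
  obtain ⟨i₀⟩ := ‹Nonempty ι›
  let R : ι → Matrix β β ℂ := Pi.single i₀ (1 - ∑ i, E i)
  have hR : 0 ≤ R := Pi.single_nonneg.mpr (sub_nonneg.mpr hsum)
  have hle (i : ι) : E i ≤ E i + R i := le_add_of_nonneg_right (hR i)
  refine ⟨fun i ↦ E i + R i, ⟨fun i ↦ ((hE i).trans (hle i)).posSemidef, ?_⟩, hle⟩
  rw [Finset.sum_add_distrib, Finset.sum_pi_single', if_pos (Finset.mem_univ i₀), add_sub_cancel]

end POVM

section Walsh

variable {m n : ℕ}

/-- The Walsh character `(-1)^⟨x, z⟩`. -/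
def bitSign (x z : Fin m → ZMod 2) : ℂ :=
  (-1 : ℂ) ^ (x ⬝ᵥ z).val

theorem bitSign_comm (x z : Fin m → ZMod 2) : bitSign x z = bitSign z x := by
  rw [bitSign, bitSign, dotProduct_comm]

theorem bitSign_add_right (x y z : Fin m → ZMod 2) :
    bitSign x (y + z) = bitSign x y * bitSign x z := by
  rw [bitSign, dotProduct_add, ZMod.val_add, ← neg_one_pow_eq_pow_mod_two, pow_add, bitSign,
    bitSign]

theorem bitSign_mul_self (x z : Fin m → ZMod 2) : bitSign x z * bitSign x z = 1 := by
  rw [bitSign, ← mul_pow, neg_one_mul, neg_neg, one_pow]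

theorem star_bitSign (x z : Fin m → ZMod 2) : star (bitSign x z) = bitSign x z := by
  simp [bitSign]

theorem sum_bitSign_mul_bitSign (x y : Fin m → ZMod 2) :
    ∑ z, bitSign x z * bitSign z y = if x = y then (2 : ℂ) ^ m else 0 := by
  let χ : AddChar (Fin m → ZMod 2) ℂ :=
    { toFun := bitSign (x + y)
      map_zero_eq_one' := by simp [bitSign]
      map_add_eq_mul' := bitSign_add_right (x + y) }
  have hχ_apply (z : Fin m → ZMod 2) : bitSign x z * bitSign z y = χ z := by
    rw [bitSign_comm x z, ← bitSign_add_right, bitSign_comm]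
    rfl
  have hχ_zero : χ = 0 ↔ x = y := by
    refine ⟨fun h ↦ funext fun i ↦ ?_, ?_⟩
    · have hi : (-1 : ℂ) ^ (x i + y i).val = 1 := by
        simpa [χ, bitSign] using DFunLike.congr_fun h (Pi.single i 1)
      have heven : ∀ a b : ZMod 2, Even (a + b).val → a = b := by decide
      exact heven _ _ ((neg_one_pow_eq_one_iff_even (by norm_num)).mp hi)
    · rintro rfl
      ext z
      rw [← hχ_apply, bitSign_comm z, bitSign_mul_self, AddChar.zero_apply]
  simp only [hχ_apply, χ.sum_eq_ite, hχ_zero, Fintype.card_fun, ZMod.card, Fintype.card_fin,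
    Nat.cast_pow, Nat.cast_ofNat]

theorem bitSign_adjLin (f : (Fin n → ZMod 2) →ₗ[ZMod 2] (Fin m → ZMod 2)) (x : Fin n → ZMod 2)
    (u : Fin m → ZMod 2) : bitSign x (adjLin f u) = bitSign (f x) u := by
  have hf : f x = LinearMap.toMatrix' f *ᵥ x := by
    rw [← Matrix.toLin'_apply, Matrix.toLin'_toMatrix']
  rw [bitSign, bitSign, hf, adjLin, Matrix.toLin'_apply, dotProduct_mulVec, vecMul_transpose]

/-- The unnormalized Walsh–Hadamard transform of a family of matrices. -/
def walsh {l r : Type*} (A : (Fin m → ZMod 2) → Matrix l r ℂ) (z : Fin m → ZMod 2) :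
    Matrix l r ℂ :=
  ∑ x, bitSign x z • A x

variable {l r s : Type*}

theorem conjTranspose_walsh (A : (Fin m → ZMod 2) → Matrix l r ℂ) (z : Fin m → ZMod 2) :
    (walsh A z)ᴴ = walsh (fun x ↦ (A x)ᴴ) z := by
  simp only [walsh, conjTranspose_sum, conjTranspose_smul, star_bitSign]

theorem walsh_walsh (A : (Fin m → ZMod 2) → Matrix l r ℂ) (x : Fin m → ZMod 2) :
    walsh (walsh A) x = (2 : ℂ) ^ m • A x := by
  simp only [walsh, Finset.smul_sum, smul_smul]
  rw [Finset.sum_comm]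
  simp only [← Finset.sum_smul, mul_comm (bitSign _ x), sum_bitSign_mul_bitSign, ite_smul,
    zero_smul, Finset.sum_ite_eq', Finset.mem_univ, if_true]

theorem sum_walsh_mul_walsh [Fintype r] (A : (Fin m → ZMod 2) → Matrix l r ℂ)
    (B : (Fin m → ZMod 2) → Matrix r s ℂ) :
    ∑ z, walsh A z * walsh B z = (2 : ℂ) ^ m • ∑ x, A x * B x := by
  calc ∑ z, walsh A z * walsh B z = ∑ z, ∑ x, A x * (bitSign z x • walsh B z) := by
        conv_lhs => enter [2, z, 1]; rw [walsh]
        simp only [Matrix.sum_mul, Matrix.smul_mul, Matrix.mul_smul, bitSign_comm]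
    _ = ∑ x, A x * walsh (walsh B) x := by
        rw [Finset.sum_comm]
        simp only [← Matrix.mul_sum]
        rfl
    _ = (2 : ℂ) ^ m • ∑ x, A x * B x := by
        simp only [walsh_walsh, Matrix.mul_smul, Finset.smul_sum]

theorem walsh_mul_walsh_of_pairwise [Fintype r] {A : (Fin m → ZMod 2) → Matrix l r ℂ}
    {B : (Fin m → ZMod 2) → Matrix r s ℂ} (h : Pairwise fun x y ↦ A x * B y = 0)
    (z : Fin m → ZMod 2) : walsh A z * walsh B z = ∑ x, A x * B x := by
  have h' : Pairwise fun x y ↦ bitSign x z • A x * bitSign y z • B y = 0 := by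
    intro x y hxy
    rw [Matrix.smul_mul, Matrix.mul_smul, h hxy, smul_zero, smul_zero]
  rw [walsh, walsh, sum_mul_sum_of_pairwise h', Finset.inter_self]
  simp only [Matrix.smul_mul, Matrix.mul_smul, smul_smul, bitSign_mul_self, one_smul]

theorem walsh_sum_fiber (g : (Fin n → ZMod 2) →ₗ[ZMod 2] (Fin m → ZMod 2))
    (A : (Fin n → ZMod 2) → Matrix l r ℂ) (w : Fin n → ZMod 2) (u : Fin m → ZMod 2) :
    walsh (fun k ↦ ∑ x with g x = k, bitSign x w • A x) u = walsh A (w + adjLin g u) := by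
  have hterm (k : Fin m → ZMod 2) : bitSign k u • ∑ x with g x = k, bitSign x w • A x =
      ∑ x with g x = k, bitSign x (w + adjLin g u) • A x := by
    rw [Finset.smul_sum]
    refine Finset.sum_congr rfl fun x hx ↦ ?_
    rw [smul_smul, bitSign_add_right, bitSign_adjLin, (Finset.mem_filter.mp hx).2, mul_comm]
  rw [walsh, Finset.sum_congr rfl fun k _ ↦ hterm k, Finset.sum_fiberwise, walsh]

theorem sum_bitSign_smul_mul_conjTranspose [Fintype r] {A : (Fin n → ZMod 2) → Matrix l r ℂ}
    (horth : Pairwise fun x y ↦ A x * (A y)ᴴ = 0) (w : Fin n → ZMod 2)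
    (s t : Finset (Fin n → ZMod 2)) :
    (∑ x ∈ s, bitSign x w • A x) * (∑ y ∈ t, bitSign y w • A y)ᴴ =
      ∑ x ∈ s ∩ t, A x * (A x)ᴴ := by
  have horth' : Pairwise fun x y ↦ bitSign x w • A x * (bitSign y w • A y)ᴴ = 0 := by
    intro x y hxy
    rw [conjTranspose_smul, Matrix.smul_mul, Matrix.mul_smul, horth hxy, smul_zero, smul_zero]
  rw [conjTranspose_sum, sum_mul_sum_of_pairwise horth']
  simp only [conjTranspose_smul, star_bitSign, Matrix.smul_mul, Matrix.mul_smul, smul_smul,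
    bitSign_mul_self, one_smul]

end Walsh

section Discrimination

open scoped MatrixOrder

variable {m n : ℕ} {r β : Type*} [Fintype r] [Fintype β] [DecidableEq β]

theorem exists_isPOVM_walsh {C : (Fin m → ZMod 2) → Matrix r β ℂ}
    (horth : Pairwise fun k k' ↦ C k * (C k')ᴴ = 0) :
    ∃ Λ : (Fin m → ZMod 2) → Matrix β β ℂ, IsPOVM Λ ∧ ∀ u,
      ((2 : ℝ) ^ m)⁻¹ *
          ((∑ k, CFC.sqrt (C k * (C k)ᴴ)) * ∑ k, CFC.sqrt (C k * (C k)ᴴ)).trace.re ≤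
        (walsh C u * Λ u * (walsh C u)ᴴ).trace.re := by
  obtain ⟨D, hD_sqrt, hD_orth, hD_sum⟩ := exists_sum_conjTranspose_mul_self_le_one horth
  set X := ∑ k, CFC.sqrt (C k * (C k)ᴴ)
  have hX : Xᴴ = X :=
    (Finset.sum_nonneg fun k _ ↦ CFC.sqrt_nonneg (C k * (C k)ᴴ) : 0 ≤ X).posSemidef.1
  have hDC (u : Fin m → ZMod 2) : walsh D u * (walsh C u)ᴴ = X := by
    rw [conjTranspose_walsh, walsh_mul_walsh_of_pairwise hD_orth]
    exact Finset.sum_congr rfl fun k _ ↦ hD_sqrt k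
  set E := fun u ↦ ((2 : ℝ) ^ m)⁻¹ • ((walsh D u)ᴴ * walsh D u)
  have hE (u : Fin m → ZMod 2) : 0 ≤ E u :=
    smul_nonneg (by positivity) (posSemidef_conjTranspose_mul_self _).nonneg
  have hE_sum : ∑ u, E u = ∑ k, (D k)ᴴ * D k := by
    have hpow : (2 : ℂ) ^ m = ((2 ^ m : ℝ) : ℂ) := by push_cast; rfl
    simp only [E, ← Finset.smul_sum, conjTranspose_walsh, sum_walsh_mul_walsh]
    rw [hpow, Complex.coe_smul, inv_smul_smul₀ (by positivity)]
  have hCEC (u : Fin m → ZMod 2) :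
      walsh C u * E u * (walsh C u)ᴴ = ((2 : ℝ) ^ m)⁻¹ • (X * X) := by
    nth_rw 1 [← hX]
    simp only [← hDC u, E, Matrix.mul_smul, Matrix.smul_mul, conjTranspose_mul,
      conjTranspose_conjTranspose, Matrix.mul_assoc]
  obtain ⟨Λ, hΛ, hle⟩ := exists_isPOVM_ge hE (hE_sum.trans_le hD_sum)
  refine ⟨Λ, hΛ, fun u ↦ ?_⟩
  have h := re_trace_mul_mul_conjTranspose_mono (hle u) (walsh C u)
  rwa [hCEC, Matrix.trace_smul, Complex.smul_re, smul_eq_mul] at h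

theorem exists_isPOVM_walsh_coset {A : (Fin n → ZMod 2) → Matrix r β ℂ}
    (horth : Pairwise fun x y ↦ A x * (A y)ᴴ = 0)
    (g : (Fin n → ZMod 2) →ₗ[ZMod 2] (Fin m → ZMod 2)) (w : Fin n → ZMod 2) :
    ∃ Λ : (Fin n → ZMod 2) → Matrix β β ℂ, IsPOVM Λ ∧
      ∀ z, z - w ∈ LinearMap.range (adjLin g) →
        ((2 : ℝ) ^ m)⁻¹ * ((∑ k, CFC.sqrt (∑ x with g x = k, A x * (A x)ᴴ)) *
            ∑ k, CFC.sqrt (∑ x with g x = k, A x * (A x)ᴴ)).trace.re ≤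
          (walsh A z * Λ z * (walsh A z)ᴴ).trace.re := by
  set C := fun k ↦ ∑ x with g x = k, bitSign x w • A x
  have hC_self (k : Fin m → ZMod 2) : C k * (C k)ᴴ = ∑ x with g x = k, A x * (A x)ᴴ := by
    rw [sum_bitSign_smul_mul_conjTranspose horth, Finset.inter_self]
  have hC_orth : Pairwise fun k k' ↦ C k * (C k')ᴴ = 0 := by
    intro k k' hk
    have hdisj : Disjoint ({x | g x = k} : Finset _) ({x | g x = k'} : Finset _) :=
      Finset.disjoint_filter.mpr fun x _ h h' ↦ hk (h.symm.trans h')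
    rw [sum_bitSign_smul_mul_conjTranspose horth, Finset.disjoint_iff_inter_eq_empty.mp hdisj,
      Finset.sum_empty]
  obtain ⟨Λ, hΛ, hle⟩ := exists_isPOVM_walsh hC_orth
  refine ⟨fun z ↦ ∑ u with w + adjLin g u = z, Λ u, hΛ.sum_fiber _, ?_⟩
  rintro z ⟨u, hu⟩
  obtain rfl : w + adjLin g u = z := by rw [hu, add_sub_cancel]
  have hΛ_le : Λ u ≤ ∑ u' with w + adjLin g u' = w + adjLin g u, Λ u' :=
    Finset.single_le_sum (fun u' _ ↦ (hΛ.posSemidef u').nonneg) (by simp)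
  have h := (hle u).trans (re_trace_mul_mul_conjTranspose_mono hΛ_le _)
  simpa only [hC_self, C, walsh_sum_fiber] using h

end Discrimination

section State

variable {n ℓ : ℕ} {β r : Type*}

theorem xVecV_eq (x z : Fin n → ZMod 2) : xVecV n x z = (√(2 ^ n) : ℂ)⁻¹ * bitSign x z := by
  rw [xVecV, bitSign, dotProduct, div_eq_inv_mul]

theorem star_xVecV (x z : Fin n → ZMod 2) : star (xVecV n x z) = xVecV n x z := by
  rw [xVecV_eq, star_mul', star_bitSign, Complex.star_def, map_inv₀, Complex.conj_ofReal]

theorem sqrt_two_pow_inv_mul_self (n : ℕ) : (√(2 ^ n) : ℂ)⁻¹ * (√(2 ^ n) : ℂ)⁻¹ = (2 ^ n)⁻¹ := by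
  rw [← mul_inv, ← Complex.ofReal_mul, Real.mul_self_sqrt (by positivity)]
  push_cast
  rfl

theorem sum_xVecV_mul_xVecV (x y : Fin n → ZMod 2) :
    ∑ z, xVecV n x z * xVecV n y z = if x = y then 1 else 0 := by
  simp only [xVecV_eq, mul_mul_mul_comm _ (bitSign x _), sqrt_two_pow_inv_mul_self,
    bitSign_comm y, ← Finset.mul_sum, sum_bitSign_mul_bitSign, mul_ite, mul_zero]
  rw [inv_mul_cancel₀ (by positivity)]

/-- The amplitudes of `(⟨z| ⊗ 1)|ψ⟩`, reshaped as an operator from `B` to `R`. -/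
def ampMatrix {α : Type*} (ψ : α × β × r → ℂ) (z : α) : Matrix r β ℂ :=
  Matrix.of fun s b ↦ ψ (z, b, s)

/-- The amplitudes of `(⟨x̃| ⊗ 1)|ψ⟩`, reshaped as an operator from `B` to `R`. -/
noncomputable def condMatrix [Fintype β] [Fintype r] (ψ : (Fin n → ZMod 2) × β × r → ℂ)
    (x : Fin n → ZMod 2) : Matrix r β ℂ :=
  Matrix.of fun s b ↦ condVecXV ψ x (b, s)

variable [Fintype β] [Fintype r]

theorem condMatrix_eq_walsh (ψ : (Fin n → ZMod 2) × β × r → ℂ) (x : Fin n → ZMod 2) :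
    condMatrix ψ x = (√(2 ^ n) : ℂ)⁻¹ • walsh (ampMatrix ψ) x := by
  ext s b
  simp only [condMatrix, condVecXV, ampMatrix, walsh, Matrix.of_apply, Matrix.smul_apply,
    Matrix.sum_apply, smul_eq_mul, Finset.mul_sum, starRingEnd_apply, star_xVecV]
  simp only [xVecV_eq, bitSign_comm x, mul_assoc]

theorem ampMatrix_eq_walsh (ψ : (Fin n → ZMod 2) × β × r → ℂ) (z : Fin n → ZMod 2) :
    ampMatrix ψ z = (√(2 ^ n) : ℂ)⁻¹ • walsh (condMatrix ψ) z := by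
  have hwalsh : walsh (condMatrix ψ) z = (√(2 ^ n) : ℂ)⁻¹ • walsh (walsh (ampMatrix ψ)) z := by
    simp only [walsh.eq_def (condMatrix ψ), condMatrix_eq_walsh, smul_comm (bitSign _ z),
      ← Finset.smul_sum]
    rfl
  rw [hwalsh, walsh_walsh, smul_smul, smul_smul, sqrt_two_pow_inv_mul_self,
    inv_mul_cancel₀ (by positivity), one_smul]

theorem ampMatrix_mul_mul_conjTranspose (ψ : (Fin n → ZMod 2) × β × r → ℂ) (z : Fin n → ZMod 2)
    (M : Matrix β β ℂ) : ampMatrix ψ z * M * (ampMatrix ψ z)ᴴ =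
      ((2 : ℝ) ^ n)⁻¹ • (walsh (condMatrix ψ) z * M * (walsh (condMatrix ψ) z)ᴴ) := by
  have hstar : star (√(2 ^ n) : ℂ)⁻¹ = (√(2 ^ n) : ℂ)⁻¹ := by
    rw [Complex.star_def, map_inv₀, Complex.conj_ofReal]
  rw [ampMatrix_eq_walsh, conjTranspose_smul, hstar, Matrix.smul_mul, Matrix.smul_mul,
    Matrix.mul_smul, smul_smul, sqrt_two_pow_inv_mul_self, ← Complex.coe_smul]
  push_cast
  rfl

theorem thetaRV_eq (ψ : (Fin n → ZMod 2) × β × r → ℂ) (x : Fin n → ZMod 2) :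
    thetaRV ψ x = condMatrix ψ x * (condMatrix ψ x)ᴴ :=
  rfl

theorem reducedR_eq_sum_ampMatrix {α : Type*} [Fintype α] (ψ : α × β × r → ℂ) :
    reducedR ψ = ∑ z, ampMatrix ψ z * (ampMatrix ψ z)ᴴ := by
  ext s s'
  rw [Matrix.sum_apply]
  rfl

theorem trace_reducedR {α : Type*} [Fintype α] (ψ : α × β × r → ℂ) :
    (reducedR ψ).trace = ((∑ p, ‖ψ p‖ ^ 2 : ℝ) : ℂ) := by
  simp only [Matrix.trace, Matrix.diag_apply, reducedR, Matrix.of_apply, Complex.mul_conj',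
    Fintype.sum_prod_type, Complex.ofReal_sum, Complex.ofReal_pow]
  rw [Finset.sum_comm]
  exact Finset.sum_congr rfl fun z _ ↦ Finset.sum_comm

theorem sum_condMatrix_mul_conjTranspose (ψ : (Fin n → ZMod 2) × β × r → ℂ) :
    ∑ x, condMatrix ψ x * (condMatrix ψ x)ᴴ = reducedR ψ := by
  have hterm (z : Fin n → ZMod 2) : ampMatrix ψ z * (ampMatrix ψ z)ᴴ = ((2 : ℝ) ^ n)⁻¹ •
      (walsh (condMatrix ψ) z * walsh (fun x ↦ (condMatrix ψ x)ᴴ) z) := by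
    simpa only [Matrix.mul_one, conjTranspose_walsh] using ampMatrix_mul_mul_conjTranspose ψ z 1
  have hpow : (2 : ℂ) ^ n = ((2 ^ n : ℝ) : ℂ) := by push_cast; rfl
  rw [reducedR_eq_sum_ampMatrix, Finset.sum_congr rfl fun z _ ↦ hterm z, ← Finset.smul_sum,
    sum_walsh_mul_walsh, hpow, Complex.coe_smul, inv_smul_smul₀ (by positivity)]

theorem keyState_eq_cqState (ψ : (Fin n → ZMod 2) × β × r → ℂ)
    (g : (Fin n → ZMod 2) →ₗ[ZMod 2] (Fin ℓ → ZMod 2)) :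
    keyState ψ g = cqState fun k ↦ ∑ x with g x = k, condMatrix ψ x * (condMatrix ψ x)ᴴ := by
  ext p q
  simp only [keyState, cqState, Matrix.of_apply, thetaRV_eq, Matrix.sum_apply]

theorem idealKeyV_eq_cqState (ℓ : ℕ) (ψ : (Fin n → ZMod 2) × β × r → ℂ) :
    idealKeyV ℓ ψ = cqState fun _ ↦ ((2 : ℂ) ^ ℓ)⁻¹ • reducedR ψ := by
  ext p q
  simp only [idealKeyV, cqState, Matrix.of_apply, Matrix.smul_apply, smul_eq_mul, ite_mul,
    zero_mul]

theorem sum_conj_mul_transpose_mul {α : Type*} (ψ : α × β × r → ℂ) (z : α) (Λ : Matrix β β ℂ) :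
    ∑ b, ∑ b', ∑ s, (starRingEnd ℂ) (ψ (z, b, s)) * Λᵀ b b' * ψ (z, b', s) =
      (ampMatrix ψ z * Λ * (ampMatrix ψ z)ᴴ).trace := by
  simp only [Matrix.trace, Matrix.diag_apply, Matrix.mul_apply, ampMatrix, Matrix.of_apply,
    conjTranspose_apply, transpose_apply, Finset.sum_mul, starRingEnd_apply]
  rw [Finset.sum_comm (s := (univ : Finset r))]
  refine Finset.sum_congr rfl fun b _ ↦ Finset.sum_comm.trans ?_
  exact Finset.sum_congr rfl fun s _ ↦ Finset.sum_congr rfl fun b' _ ↦ by ring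

end State

section Correlated

variable {n : ℕ} {β₂ r : Type*}

/-- The vector `∑ x, √(q x) |x̃⟩_A |x̃⟩_{B₁} |ϑ x⟩_{B₂R}`, in which `B` determines the outcome of an
`X`-measurement on `A`. -/
noncomputable def xCorrelated (q : (Fin n → ZMod 2) → ℝ) (ϑ : (Fin n → ZMod 2) → β₂ × r → ℂ) :
    (Fin n → ZMod 2) × ((Fin n → ZMod 2) × β₂) × r → ℂ :=
  fun p ↦ ∑ x, (√(q x) : ℂ) * xVecV n x p.1 * xVecV n x p.2.1.1 * ϑ x (p.2.1.2, p.2.2)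

variable [Fintype β₂] [Fintype r] (q : (Fin n → ZMod 2) → ℝ) (ϑ : (Fin n → ZMod 2) → β₂ × r → ℂ)

theorem condMatrix_xCorrelated_apply (x : Fin n → ZMod 2) (s : r) (b : (Fin n → ZMod 2) × β₂) :
    condMatrix (xCorrelated q ϑ) x s b = √(q x) * xVecV n x b.1 * ϑ x (b.2, s) := by
  simp only [condMatrix, Matrix.of_apply, condVecXV, xCorrelated, starRingEnd_apply, star_xVecV,
    Finset.mul_sum]
  rw [Finset.sum_comm]
  calc ∑ y, ∑ z, xVecV n x z * (√(q y) * xVecV n y z * xVecV n y b.1 * ϑ y (b.2, s))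
      = ∑ y, (∑ z, xVecV n x z * xVecV n y z) * (√(q y) * xVecV n y b.1 * ϑ y (b.2, s)) := by
        simp only [Finset.sum_mul]
        exact Finset.sum_congr rfl fun y _ ↦ Finset.sum_congr rfl fun z _ ↦ by ring
    _ = √(q x) * xVecV n x b.1 * ϑ x (b.2, s) := by
        simp only [sum_xVecV_mul_xVecV, ite_mul, one_mul, zero_mul, Finset.sum_ite_eq,
          Finset.mem_univ, if_true]

theorem condMatrix_xCorrelated_mul_conjTranspose_apply (x y : Fin n → ZMod 2) (s s' : r) :
    (condMatrix (xCorrelated q ϑ) x * (condMatrix (xCorrelated q ϑ) y)ᴴ) s s' =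
      if x = y then √(q x) * √(q y) * ∑ b, ϑ x (b, s) * star (ϑ y (b, s')) else 0 := by
  simp only [Matrix.mul_apply, conjTranspose_apply, condMatrix_xCorrelated_apply, star_mul',
    star_xVecV, Complex.star_def, Complex.conj_ofReal, Fintype.sum_prod_type]
  calc ∑ z, ∑ b, (√(q x) * xVecV n x z * ϑ x (b, s)) *
        (√(q y) * xVecV n y z * (starRingEnd ℂ) (ϑ y (b, s')))
      = (∑ z, xVecV n x z * xVecV n y z) *
          (√(q x) * √(q y) * ∑ b, ϑ x (b, s) * (starRingEnd ℂ) (ϑ y (b, s'))) := by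
        simp only [Finset.mul_sum, Finset.sum_mul]
        rw [Finset.sum_comm]
        exact Finset.sum_congr rfl fun b _ ↦ Finset.sum_congr rfl fun z _ ↦ by ring
    _ = _ := by rw [sum_xVecV_mul_xVecV, ite_mul, one_mul, zero_mul]

theorem pairwise_condMatrix_xCorrelated : Pairwise fun x y ↦
    condMatrix (xCorrelated q ϑ) x * (condMatrix (xCorrelated q ϑ) y)ᴴ = 0 := by
  intro x y hxy
  ext s s'
  rw [condMatrix_xCorrelated_mul_conjTranspose_apply, if_neg hxy, Matrix.zero_apply]

variable {q ϑ}

theorem sum_norm_sq_xCorrelated (hq : ∀ x, 0 ≤ q x) (hϑ : ∀ x, ∑ t, ‖ϑ x t‖ ^ 2 = 1) :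
    ∑ p, ‖xCorrelated q ϑ p‖ ^ 2 = ∑ x, q x := by
  have htrace (x : Fin n → ZMod 2) :
      (condMatrix (xCorrelated q ϑ) x * (condMatrix (xCorrelated q ϑ) x)ᴴ).trace = q x := by
    calc _ = ((√(q x) * √(q x) * ∑ t, ‖ϑ x t‖ ^ 2 : ℝ) : ℂ) := by
          simp only [Matrix.trace, Matrix.diag_apply, if_true, ← Finset.mul_sum, Complex.star_def,
            condMatrix_xCorrelated_mul_conjTranspose_apply, Complex.mul_conj']
          rw [Finset.sum_comm, ← Fintype.sum_prod_type fun t ↦ (‖ϑ x t‖ : ℂ) ^ 2]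
          push_cast
          rfl
      _ = q x := by rw [hϑ, mul_one, Real.mul_self_sqrt (hq x)]
  have h := trace_reducedR (xCorrelated q ϑ)
  rw [← sum_condMatrix_mul_conjTranspose, Matrix.trace_sum] at h
  simp only [htrace] at h
  exact_mod_cast h.symm

end Correlated

open scoped MatrixOrder in
theorem pa_implies_csi_caseA_general {n ℓ : ℕ} {β r κ : Type*} [Fintype β] [DecidableEq β]
    [Fintype r] [DecidableEq r]
    {ψ : (Fin n → ZMod 2) × β × r → ℂ} (hψ : ∑ p, ‖ψ p‖ ^ 2 = 1)
    (hX : Pairwise fun x y ↦ condMatrix ψ x * (condMatrix ψ y)ᴴ = 0)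
    {g : (Fin n → ZMod 2) →ₗ[ZMod 2] (Fin ℓ → ZMod 2)} {ε : ℝ} (hε : ε ≤ 1)
    (hsec : traceDist (keyState ψ g) (idealKeyV ℓ ψ) ≤ ε) {f : (Fin n → ZMod 2) → κ}
    (hf : ∀ z z', f z = f z' → z - z' ∈ LinearMap.range (adjLin g)) :
    ∃ Λ : κ → (Fin n → ZMod 2) → Matrix β β ℂ, (∀ c, IsPOVM (Λ c)) ∧
      (1 - ε) ^ 2 ≤ (∑ z, ∑ b, ∑ b', ∑ s,
        (starRingEnd ℂ) (ψ (z, b, s)) * Λ (f z) z b b' * ψ (z, b', s)).re := by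
  set G := fun k ↦ ∑ x with g x = k, condMatrix ψ x * (condMatrix ψ x)ᴴ
  have hG (k : Fin ℓ → ZMod 2) : 0 ≤ G k :=
    Finset.sum_nonneg fun x _ ↦ (posSemidef_self_mul_conjTranspose (condMatrix ψ x)).nonneg
  have hG_sum : ∑ k, G k = reducedR ψ := by
    rw [Finset.sum_fiberwise, sum_condMatrix_mul_conjTranspose]
  have hG_tr : (∑ k, G k).trace = 1 := by
    rw [hG_sum, trace_reducedR, hψ, Complex.ofReal_one]
  have hcard : Fintype.card (Fin ℓ → ZMod 2) = 2 ^ ℓ := by simp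
  have hfidelity := one_sub_sq_le_of_traceDist_cqState_le hG hG_tr hε (by
    rwa [hG_sum, hcard, Nat.cast_pow, Nat.cast_ofNat, ← idealKeyV_eq_cqState,
      ← keyState_eq_cqState])
  rw [hcard, Nat.cast_pow, Nat.cast_ofNat] at hfidelity
  choose Λ hΛ hle using fun c ↦ exists_isPOVM_walsh_coset hX g (Function.invFun f c)
  have hcoset (z : Fin n → ZMod 2) :
      z - Function.invFun f (f z) ∈ LinearMap.range (adjLin g) :=
    hf _ _ (Function.invFun_eq ⟨z, rfl⟩).symm
  have hsuccess (z : Fin n → ZMod 2) : ((2 : ℝ) ^ n)⁻¹ * (1 - ε) ^ 2 ≤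
      (ampMatrix ψ z * Λ (f z) z * (ampMatrix ψ z)ᴴ).trace.re := by
    rw [ampMatrix_mul_mul_conjTranspose, Matrix.trace_smul, Complex.smul_re, smul_eq_mul]
    gcongr
    exact hfidelity.trans (hle (f z) z (hcoset z))
  -- An effect on `B` acts by its transpose on amplitudes reshaped as operators from `B` to `R`.
  refine ⟨fun c z ↦ (Λ c z)ᵀ, fun c ↦ (hΛ c).transpose, ?_⟩
  simp only [sum_conj_mul_transpose_mul]
  rw [Complex.re_sum]
  calc (1 - ε) ^ 2 = ∑ _z : Fin n → ZMod 2, ((2 : ℝ) ^ n)⁻¹ * (1 - ε) ^ 2 := by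
        simp
    _ ≤ _ := Finset.sum_le_sum fun z _ ↦ hsuccess z

theorem one_sub_sqrt_two_mul_le_one_sub_sq {ε : ℝ} (hε : 0 ≤ ε) : 1 - √(2 * ε) ≤ (1 - ε) ^ 2 := by
  rcases le_total (2 * ε) 1 with h | h
  · have hsqrt : 2 * ε ≤ √(2 * ε) := Real.le_sqrt_of_sq_le (by nlinarith)
    nlinarith [sq_nonneg ε]
  · have hsqrt : 1 ≤ √(2 * ε) := Real.one_le_sqrt.mpr h
    nlinarith [sq_nonneg (1 - ε)]

/-- For a state with H(X^A|B) = 0 (form ∑_x √q_x |x̃⟩_A|x̃⟩_{B₁}|ϑ_x⟩_{B₂R}),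
if the hashed X-key from a surjective linear extractor g to ℓ bits is ε-secure against R,
then every surjective linear f⊥ to n−ℓ bits with ker f⊥ = range gᵀ is a compressor from
which, together with B = B₁B₂, the Z-outcome is √(2ε)-recoverable. -/
theorem pa_implies_csi_caseA {n ℓ : ℕ} (hn : 1 ≤ n) (hℓ : ℓ ≤ n)
    {β₂ r : Type*} [Fintype β₂] [DecidableEq β₂] [Fintype r] [DecidableEq r]
    (q : (Fin n → ZMod 2) → ℝ) (hq0 : ∀ x, 0 ≤ q x) (hq1 : ∑ x, q x = 1)
    (ϑ : (Fin n → ZMod 2) → β₂ × r → ℂ) (hϑ : ∀ x, ∑ t, ‖ϑ x t‖ ^ 2 = 1)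
    (ψ : (Fin n → ZMod 2) × ((Fin n → ZMod 2) × β₂) × r → ℂ)
    (hform : ∀ a b₁ b₂ s, ψ (a, (b₁, b₂), s)
        = ∑ x, (Real.sqrt (q x) : ℂ) * xVecV n x a * xVecV n x b₁ * ϑ x (b₂, s))
    (g : ((Fin n → ZMod 2)) →ₗ[ZMod 2] (Fin ℓ → ZMod 2)) (hg : Function.Surjective g)
    (ε : ℝ) (hε0 : 0 ≤ ε) (hε1 : ε ≤ 1)
    (hsec : traceDist (keyState ψ g) (idealKeyV ℓ ψ) ≤ ε) :
    ∀ fp : ((Fin n → ZMod 2)) →ₗ[ZMod 2] (Fin (n - ℓ) → ZMod 2),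
      Function.Surjective fp → LinearMap.ker fp = LinearMap.range (adjLin g) →
      ∃ Λ : (Fin (n - ℓ) → ZMod 2) → (Fin n → ZMod 2) →
          Matrix ((Fin n → ZMod 2) × β₂) ((Fin n → ZMod 2) × β₂) ℂ,
        (∀ c z, (Λ c z).PosSemidef) ∧ (∀ c, ∑ z, Λ c z = 1) ∧
        1 - Real.sqrt (2 * ε) ≤ (∑ z, ∑ b, ∑ b', ∑ s,
          (starRingEnd ℂ) (ψ (z, b, s)) * Λ (fp z) z b b' * ψ (z, b', s)).re := by
  intro fp _ hker
  obtain rfl : ψ = xCorrelated q ϑ := funext fun ⟨a, ⟨b₁, b₂⟩, s⟩ ↦ hform a b₁ b₂ s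
  have hψ := (sum_norm_sq_xCorrelated hq0 hϑ).trans hq1
  have hcoset (z z' : Fin n → ZMod 2) (h : fp z = fp z') : z - z' ∈ LinearMap.range (adjLin g) :=
    hker ▸ LinearMap.sub_mem_ker_iff.mpr h
  obtain ⟨Λ, hΛ, hsuccess⟩ :=
    pa_implies_csi_caseA_general hψ (pairwise_condMatrix_xCorrelated q ϑ) hε1 hsec hcoset
  exact ⟨Λ, fun c ↦ (hΛ c).posSemidef, fun c ↦ (hΛ c).sum_eq_one,
    (one_sub_sqrt_two_mul_le_one_sub_sq hε0).trans hsuccess⟩
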